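/- arXiv:2301.05005 — 2 statements merged into one kernel-verified Lean document; each statement's English description precedes it below -/
import Mathlib

section
/- Let X be an m×n complex matrix of rank r. Then there exist an r×m complex matrix L and an r×n complex matrix R, both of rank r, such that X = Lᴴ R and ‖L‖_c · ‖R‖_c = ‖S_X‖, where ‖S_X‖ is the operator norm of the Schur multiplication map A ↦ X ∘ A on the m×n complex matrices equipped with the ℓ²→ℓ² operator norm. -/
/-!
If `X = Lᴴ * R`, then `⟪u, (X ⊙ A) v⟫` is the sum over `k` of `⟪L k * u, A (R k * v)⟫`, and
Cauchy–Schwarz gives `schurNorm X ≤ colNorm L * colNorm R`.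

The converse is semidefinite duality. Suppose no positive semidefinite block matrix has off-diagonal
block `X` and all diagonal entries equal to `schurNorm X`. The pairs (off-diagonal block, diagonal)
of positive semidefinite matrices form a closed convex cone, so Hahn–Banach yields a separating
functional. Positivity on the cone forces that functional to be given by a matrix `√s * A * √t`
with `A` a contraction and `s`, `t` nonnegative diagonal matrices, and then separation contradicts
`‖X ⊙ A‖ ≤ schurNorm X`. Hence `X i j = ⟪x i, y j⟫` with `‖x i‖ ^ 2 = ‖y j‖ ^ 2 = schurNorm X`.
Projecting the `x i` to the span of the `y j`, and then the `y j` to the span of the projected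
`x i`, changes no inner product and increases no norm, and leaves vectors in a space of dimension
`X.rank`; their coordinates in an orthonormal basis are the columns of `L` and `R`.
-/

open Matrix BigOperators

/-- The ℓ²→ℓ² operator norm of a complex matrix. -/
noncomputable def opNorm {m n : ℕ} (A : Matrix (Fin m) (Fin n) ℂ) : ℝ :=
  ‖(Matrix.toEuclideanLin A).toContinuousLinearMap‖

/-- The column norm: the maximum Euclidean norm of a column. -/
noncomputable def colNorm {l m : ℕ} (L : Matrix (Fin l) (Fin m) ℂ) : ℝ :=
  ⨆ j : Fin m, Real.sqrt (∑ i, ‖L i j‖ ^ 2)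

/-- The Schur multiplier norm of `X` : the operator norm of `A ↦ X ∘ A` where the
matrices carry the ℓ²→ℓ² operator norm. -/
noncomputable def schurNorm {m n : ℕ} (X : Matrix (Fin m) (Fin n) ℂ) : ℝ :=
  ⨆ A : {A : Matrix (Fin m) (Fin n) ℂ // opNorm A ≤ 1}, opNorm (Matrix.hadamard X A.1)

open scoped InnerProductSpace Matrix.Norms.L2Operator ComplexOrder MatrixOrder
open RCLike (re)

section RankReduction

variable {𝕜 E ι m n : Type*} [RCLike 𝕜] [NormedAddCommGroup E] [InnerProductSpace 𝕜 E]

lemma inner_starProjection_left_of_mem {V : Submodule 𝕜 E} [V.HasOrthogonalProjection] (x : E)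
    {v : E} (hv : v ∈ V) : ⟪V.starProjection x, v⟫_𝕜 = ⟪x, v⟫_𝕜 := by
  rw [Submodule.inner_starProjection_left_eq_right, Submodule.starProjection_eq_self_iff.2 hv]

lemma eq_zero_of_mem_span_of_inner_eq_zero {y : ι → E} {z : E}
    (hz : z ∈ Submodule.span 𝕜 (Set.range y)) (h : ∀ j, ⟪y j, z⟫_𝕜 = 0) : z = 0 := by
  have hle : Submodule.span 𝕜 (Set.range y) ≤ (𝕜 ∙ z)ᗮ := by
    rw [Submodule.span_le]
    rintro _ ⟨j, rfl⟩
    exact Submodule.mem_orthogonal_singleton_iff_inner_left.2 (h j)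
  exact inner_self_eq_zero.1 (Submodule.mem_orthogonal_singleton_iff_inner_left.1 (hle hz))

lemma finrank_span_eq_rank_of_inner [Finite m] [Fintype n] {x : m → E} {y : n → E}
    (hx : ∀ i, x i ∈ Submodule.span 𝕜 (Set.range y)) :
    Module.finrank 𝕜 (Submodule.span 𝕜 (Set.range x)) =
      (of fun i j => ⟪x i, y j⟫_𝕜 : Matrix m n 𝕜).rank := by
  have := Fintype.ofFinite m
  let W := Submodule.span 𝕜 (Set.range x)
  let T : E →ₗ[𝕜] n → 𝕜 := LinearMap.pi fun j => (innerSL 𝕜 (y j)).toLinearMap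
  have hWy : W ≤ Submodule.span 𝕜 (Set.range y) := Submodule.span_le.2 (Set.range_subset_iff.2 hx)
  have hinj : Function.Injective (T.domRestrict W) := by
    rw [← LinearMap.ker_eq_bot, LinearMap.ker_eq_bot']
    exact fun z hz =>
      Subtype.ext (eq_zero_of_mem_span_of_inner_eq_zero (hWy z.2) fun j => congrFun hz j)
  have hT : T ∘ x = (of fun i j => ⟪x i, y j⟫_𝕜 : Matrix m n 𝕜)ᴴ.col := by
    ext i j
    simp [T]
  rw [← LinearMap.finrank_range_of_inj hinj, LinearMap.range_domRestrict, Submodule.map_span,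
    ← Set.range_comp, hT, ← rank_eq_finrank_span_cols, rank_conjTranspose]

lemma inner_eq_sum_inner_mul_inner_of_mem [Fintype ι] {W : Submodule 𝕜 E}
    (e : OrthonormalBasis ι 𝕜 W) {x : E} (hx : x ∈ W) (y : E) :
    ⟪x, y⟫_𝕜 = ∑ k, ⟪x, (e k : E)⟫_𝕜 * ⟪(e k : E), y⟫_𝕜 := by
  have : FiniteDimensional 𝕜 W := e.toBasis.finiteDimensional_of_finite
  have h (z : W) : ⟪(z : E), y⟫_𝕜 = ⟪z, W.orthogonalProjectionOnto y⟫_𝕜 :=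
    (W.inner_orthogonalProjectionOnto_eq_of_mem_left z y).symm
  rw [h ⟨x, hx⟩, ← e.sum_inner_mul_inner]
  exact Finset.sum_congr rfl fun k _ => congrArg (⟪x, (e k : E)⟫_𝕜 * ·) (h (e k)).symm

theorem exists_conjTranspose_mul_eq_of_inner [Finite m] [Fintype n] (X : Matrix m n 𝕜)
    (x : m → E) (y : n → E) (hX : ∀ i j, ⟪x i, y j⟫_𝕜 = X i j) :
    ∃ (L : Matrix (Fin X.rank) m 𝕜) (R : Matrix (Fin X.rank) n 𝕜), X = Lᴴ * R ∧
      (∀ i, ∑ k, ‖L k i‖ ^ 2 ≤ ‖x i‖ ^ 2) ∧ ∀ j, ∑ k, ‖R k j‖ ^ 2 ≤ ‖y j‖ ^ 2 := by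
  let V := Submodule.span 𝕜 (Set.range y)
  have : FiniteDimensional 𝕜 V := .span_of_finite 𝕜 (Set.finite_range y)
  let p (i) : E := V.starProjection (x i)
  let W := Submodule.span 𝕜 (Set.range p)
  have : FiniteDimensional 𝕜 W := .span_of_finite 𝕜 (Set.finite_range p)
  have hpV (i) : p i ∈ V := V.starProjection_apply_mem _
  have hWV : W ≤ V := Submodule.span_le.2 (Set.range_subset_iff.2 hpV)
  have hp (i j) : ⟪p i, y j⟫_𝕜 = X i j := by
    rw [← hX]
    exact inner_starProjection_left_of_mem _ (Submodule.subset_span ⟨j, rfl⟩)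
  have hW : Module.finrank 𝕜 W = X.rank := by
    rw [finrank_span_eq_rank_of_inner hpV]
    exact congrArg rank (by ext i j; exact hp i j)
  let e := (stdOrthonormalBasis 𝕜 W).reindex (finCongr hW)
  have he : Orthonormal 𝕜 fun k => (e k : E) := e.orthonormal.comp_linearIsometry W.subtypeₗᵢ
  refine ⟨of fun k i => ⟪(e k : E), x i⟫_𝕜, of fun k j => ⟪(e k : E), y j⟫_𝕜, ?_,
    fun i => he.sum_inner_products_le _, fun j => he.sum_inner_products_le _⟩
  ext i j
  rw [← hp, inner_eq_sum_inner_mul_inner_of_mem e (Submodule.subset_span ⟨i, rfl⟩), mul_apply]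
  refine Finset.sum_congr rfl fun k _ => ?_
  rw [inner_starProjection_left_of_mem _ (hWV (e k).2)]
  simp

end RankReduction

variable {𝕜 ι m n l : Type*} [RCLike 𝕜] [Fintype ι] [Fintype m] [Fintype n] [Fintype l]

lemma rank_eq_card_of_rank_conjTranspose_mul_eq {L : Matrix l m 𝕜} {R : Matrix l n 𝕜}
    (h : (Lᴴ * R).rank = Fintype.card l) : L.rank = Fintype.card l ∧ R.rank = Fintype.card l := by
  refine ⟨L.rank_le_card_height.antisymm ?_, R.rank_le_card_height.antisymm ?_⟩
  · rw [← rank_conjTranspose L]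
    exact h.symm.le.trans (rank_mul_le_left _ _)
  · exact h.symm.le.trans (rank_mul_le_right _ _)

lemma inner_toEuclideanLin_eq_sum [DecidableEq n] (A : Matrix m n 𝕜) (u : EuclideanSpace 𝕜 m)
    (v : EuclideanSpace 𝕜 n) :
    ⟪u, toEuclideanLin A v⟫_𝕜 = ∑ i, ∑ j, star (u i) * A i j * v j := by
  simp [PiLp.inner_apply, mulVec, dotProduct, Finset.mul_sum, mul_assoc,
    mul_comm, mul_left_comm]

lemma norm_inner_toEuclideanLin_le [DecidableEq n] (A : Matrix m n 𝕜) (u : EuclideanSpace 𝕜 m)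
    (v : EuclideanSpace 𝕜 n) : ‖⟪u, toEuclideanLin A v⟫_𝕜‖ ≤ ‖A‖ * (‖u‖ * ‖v‖) :=
  calc ‖⟪u, toEuclideanLin A v⟫_𝕜‖ ≤ ‖u‖ * ‖toEuclideanLin A v‖ := norm_inner_le_norm _ _
    _ ≤ ‖u‖ * (‖A‖ * ‖v‖) := by gcongr; exact l2_opNorm_mulVec A v
    _ = ‖A‖ * (‖u‖ * ‖v‖) := by ring

lemma l2_opNorm_le_of_re_inner_le [DecidableEq n] {A : Matrix m n 𝕜} {c : ℝ} (hc : 0 ≤ c)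
    (h : ∀ u v, ‖u‖ = 1 → ‖v‖ = 1 → re ⟪u, toEuclideanLin A v⟫_𝕜 ≤ c) : ‖A‖ ≤ c := by
  rw [l2_opNorm_def]
  refine ContinuousLinearMap.opNorm_le_of_re_inner_le (𝕜 := 𝕜) hc fun v u hv hu => ?_
  rw [inner_re_symm]
  exact h u v hu hv

lemma inner_toEuclideanLin_hadamard_conjTranspose_mul [DecidableEq n] (L : Matrix l m 𝕜)
    (R : Matrix l n 𝕜) (A : Matrix m n 𝕜) (u : EuclideanSpace 𝕜 m) (v : EuclideanSpace 𝕜 n) :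
    ⟪u, toEuclideanLin ((Lᴴ * R) ⊙ A) v⟫_𝕜 =
      ∑ k, ⟪WithLp.toLp 2 (L k * u), toEuclideanLin A (WithLp.toLp 2 (R k * v))⟫_𝕜 := by
  simp only [inner_toEuclideanLin_eq_sum, hadamard_apply, mul_apply, conjTranspose_apply,
    Finset.sum_mul, Finset.mul_sum, Pi.mul_apply, star_mul']
  symm
  rw [Finset.sum_comm]
  refine Finset.sum_congr rfl fun i _ => ?_
  rw [Finset.sum_comm]
  refine Finset.sum_congr rfl fun j _ => Finset.sum_congr rfl fun k _ => ?_
  ring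

lemma sum_norm_sq_toLp_mul_le {L : Matrix l m 𝕜} {a : ℝ} (hL : ∀ i, ∑ k, ‖L k i‖ ^ 2 ≤ a ^ 2)
    (u : EuclideanSpace 𝕜 m) : ∑ k, ‖WithLp.toLp 2 (L k * u)‖ ^ 2 ≤ (a * ‖u‖) ^ 2 := by
  simp only [EuclideanSpace.norm_sq_eq, Pi.mul_apply, norm_mul, mul_pow]
  rw [Finset.sum_comm, Finset.mul_sum]
  simp only [← Finset.sum_mul]
  gcongr with i
  exact hL i

theorem l2_opNorm_hadamard_conjTranspose_mul_le [DecidableEq n] {L : Matrix l m 𝕜}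
    {R : Matrix l n 𝕜} {a b : ℝ} (ha : 0 ≤ a) (hb : 0 ≤ b) (hL : ∀ i, ∑ k, ‖L k i‖ ^ 2 ≤ a ^ 2)
    (hR : ∀ j, ∑ k, ‖R k j‖ ^ 2 ≤ b ^ 2) (A : Matrix m n 𝕜) :
    ‖(Lᴴ * R) ⊙ A‖ ≤ ‖A‖ * (a * b) := by
  refine l2_opNorm_le_of_re_inner_le (by positivity) fun u v hu hv => ?_
  let Lu (k) : EuclideanSpace 𝕜 m := WithLp.toLp 2 (L k * u)
  let Rv (k) : EuclideanSpace 𝕜 n := WithLp.toLp 2 (R k * v)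
  have hLu : √(∑ k, ‖Lu k‖ ^ 2) ≤ a :=
    Real.sqrt_le_iff.2 ⟨ha, (sum_norm_sq_toLp_mul_le hL u).trans_eq (by rw [hu, mul_one])⟩
  have hRv : √(∑ k, ‖Rv k‖ ^ 2) ≤ b :=
    Real.sqrt_le_iff.2 ⟨hb, (sum_norm_sq_toLp_mul_le hR v).trans_eq (by rw [hv, mul_one])⟩
  calc re ⟪u, toEuclideanLin ((Lᴴ * R) ⊙ A) v⟫_𝕜
      ≤ ‖∑ k, ⟪Lu k, toEuclideanLin A (Rv k)⟫_𝕜‖ := by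
        rw [inner_toEuclideanLin_hadamard_conjTranspose_mul]
        exact RCLike.re_le_norm _
    _ ≤ ∑ k, ‖A‖ * (‖Lu k‖ * ‖Rv k‖) :=
        norm_sum_le_of_le _ fun k _ => norm_inner_toEuclideanLin_le _ _ _
    _ = ‖A‖ * ∑ k, ‖Lu k‖ * ‖Rv k‖ := (Finset.mul_sum ..).symm
    _ ≤ ‖A‖ * (√(∑ k, ‖Lu k‖ ^ 2) * √(∑ k, ‖Rv k‖ ^ 2)) := by
        gcongr
        exact Real.sum_mul_le_sqrt_mul_sqrt _ _ _
    _ ≤ ‖A‖ * (a * b) :=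
        mul_le_mul_of_nonneg_left (mul_le_mul hLu hRv (Real.sqrt_nonneg _) ha) (norm_nonneg A)

lemma exists_gram_eq_of_posSemidef {Z : Matrix ι ι 𝕜} (hZ : Z.PosSemidef) :
    ∃ v : ι → EuclideanSpace 𝕜 ι, gram 𝕜 v = Z := by
  classical
  obtain ⟨B, rfl⟩ := CStarAlgebra.nonneg_iff_eq_star_mul_self.1 hZ.nonneg
  refine ⟨fun k => WithLp.toLp 2 (B.col k), ?_⟩
  ext i j
  simp [gram_apply, PiLp.inner_apply, mul_apply, star_eq_conjTranspose, mul_comm]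

variable (𝕜 m n) in
/-- The affine data prescribed in the semidefinite program computing a Schur multiplier norm: the
off-diagonal block of a block matrix together with its diagonal. Only the real part of the diagonal
is recorded, which loses nothing on Hermitian matrices. -/
def cornerDiag : Matrix (m ⊕ n) (m ⊕ n) 𝕜 →ₗ[ℝ] Matrix m n 𝕜 × (m ⊕ n → ℝ) where
  toFun Z := (Z.toBlocks₁₂, fun k => re (Z k k))
  map_add' _ _ := by ext <;> simp [toBlocks₁₂]
  map_smul' _ _ := by ext <;> simp [toBlocks₁₂, RCLike.smul_re]

lemma norm_sq_le_norm_cornerDiag_gram [DecidableEq n] (v : m ⊕ n → EuclideanSpace 𝕜 (m ⊕ n)) :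
    ‖v‖ ^ 2 ≤ ‖cornerDiag 𝕜 m n (gram 𝕜 v)‖ := by
  have hv (k) : ‖v k‖ ≤ √‖cornerDiag 𝕜 m n (gram 𝕜 v)‖ := by
    refine Real.le_sqrt_of_sq_le ?_
    calc ‖v k‖ ^ 2 = ‖(cornerDiag 𝕜 m n (gram 𝕜 v)).2 k‖ := by simp [cornerDiag, gram_apply]
      _ ≤ ‖cornerDiag 𝕜 m n (gram 𝕜 v)‖ := (norm_le_pi_norm _ k).trans (norm_snd_le _)
  exact (Real.le_sqrt (norm_nonneg _) (norm_nonneg _)).1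
    ((pi_norm_le_iff_of_nonneg (Real.sqrt_nonneg _)).2 hv)

lemma continuous_cornerDiag_gram : Continuous fun v : m ⊕ n → EuclideanSpace 𝕜 (m ⊕ n) =>
    cornerDiag 𝕜 m n (gram 𝕜 v) := by
  simp only [cornerDiag, LinearMap.coe_mk, AddHom.coe_mk, toBlocks₁₂, gram_apply]
  refine .prodMk ?_ ?_
  · refine continuous_matrix ?_
    intro i j
    simp only [of_apply]
    fun_prop
  · fun_prop

lemma image_cornerDiag_setOf_posSemidef :
    cornerDiag 𝕜 m n '' {Z | Z.PosSemidef} =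
      Set.range fun v : m ⊕ n → EuclideanSpace 𝕜 (m ⊕ n) => cornerDiag 𝕜 m n (gram 𝕜 v) := by
  ext z
  constructor
  · rintro ⟨Z, hZ, rfl⟩
    obtain ⟨v, rfl⟩ := exists_gram_eq_of_posSemidef hZ
    exact ⟨v, rfl⟩
  · rintro ⟨v, rfl⟩
    exact ⟨_, posSemidef_gram 𝕜 v, rfl⟩

lemma isClosed_image_cornerDiag_posSemidef {m n : Type*} [Finite m] [Finite n] :
    IsClosed (cornerDiag 𝕜 m n '' {Z | Z.PosSemidef}) := by
  classical
  have := Fintype.ofFinite m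
  have := Fintype.ofFinite n
  have : ProperSpace (Matrix m n 𝕜) := FiniteDimensional.proper 𝕜 _
  rw [image_cornerDiag_setOf_posSemidef]
  refine (isProperMap_iff_tendsto_cocompact.2
    ⟨continuous_cornerDiag_gram, ?_⟩).isClosedMap.isClosed_range
  rw [← Metric.cobounded_eq_cocompact, ← Metric.cobounded_eq_cocompact,
    ← tendsto_norm_atTop_iff_cobounded]
  exact Filter.tendsto_atTop_mono norm_sq_le_norm_cornerDiag_gram
    ((Filter.tendsto_pow_atTop two_ne_zero).comp tendsto_norm_cobounded_atTop)

variable (𝕜 m n) in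
/-- The closed convex cone of pairs (off-diagonal block, diagonal) of positive semidefinite block
matrices, equivalently of pairs `(⟪x i, y j⟫, (‖x i‖ ^ 2, ‖y j‖ ^ 2))` for finite families of
vectors `x` and `y`; membership is feasibility of the semidefinite program. -/
noncomputable def gramCone : ProperCone ℝ (Matrix m n 𝕜 × (m ⊕ n → ℝ)) where
  toSubmodule := (PointedCone.positive ℝ (Matrix (m ⊕ n) (m ⊕ n) 𝕜)).map (cornerDiag 𝕜 m n)
  isClosed' := by
    convert isClosed_image_cornerDiag_posSemidef (𝕜 := 𝕜) (m := m) (n := n)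
    ext
    simp [nonneg_iff_posSemidef]

lemma dual_apply_eq_sum_single_mul [DecidableEq m] [DecidableEq n]
    (g : Module.Dual 𝕜 (Matrix m n 𝕜)) (Y : Matrix m n 𝕜) :
    g Y = ∑ i, ∑ j, g (.single i j 1) * Y i j := by
  conv_lhs => rw [matrix_eq_sum_single Y]
  simp only [map_sum]
  refine Finset.sum_congr rfl fun i _ => Finset.sum_congr rfl fun j _ => ?_
  rw [mul_comm, ← smul_eq_mul, ← map_smul, smul_single, smul_eq_mul, mul_one]

lemma exists_dual_prod_apply_eq_sum_sub (f : Module.Dual ℝ (Matrix m n 𝕜 × (ι → ℝ))) :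
    ∃ (B : Matrix m n 𝕜) (w : ι → ℝ), ∀ Y d,
      f (Y, d) = ∑ k, w k * d k - 2 * re (∑ i, ∑ j, B i j * Y i j) := by
  classical
  let f₁ : Module.Dual ℝ (Matrix m n 𝕜) := (-2⁻¹ : ℝ) • f ∘ₗ .inl ℝ _ _
  let g : Module.Dual 𝕜 (Matrix m n 𝕜) := Module.Dual.extendRCLike f₁
  refine ⟨of fun i j => g (.single i j 1), fun k => f (0, fun j => if k = j then 1 else 0),
    fun Y d => ?_⟩
  have hg : re (∑ i, ∑ j, g (.single i j 1) * Y i j) = -2⁻¹ * f (Y, 0) := by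
    rw [← dual_apply_eq_sum_single_mul]
    exact Module.Dual.re_extendRCLike_apply f₁ Y
  have hd : f (0, d) = ∑ k, f (0, fun j => if k = j then 1 else 0) * d k := by
    simpa [mul_comm] using LinearMap.pi_apply_eq_sum_univ (f ∘ₗ .inr ℝ _ _) d
  calc f (Y, d) = f (Y, 0) + f (0, d) := by rw [← map_add, Prod.mk_add_mk, add_zero, zero_add]
    _ = ∑ k, f (0, fun j => if k = j then 1 else 0) * d k -
          2 * re (∑ i, ∑ j, g (.single i j 1) * Y i j) := by
        rw [hg, hd]
        ring

/-- Feasibility for the dual semidefinite program: the block matrix with diagonal `w` and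
off-diagonal blocks `-B`, `-Bᴴ` is positive semidefinite, written out as a quadratic form. -/
def DominatedBy (B : Matrix m n 𝕜) (w : m ⊕ n → ℝ) : Prop :=
  ∀ (x : m → 𝕜) (y : n → 𝕜),
    2 * re (∑ i, ∑ j, star (x i) * B i j * y j) ≤
      ∑ i, w (.inl i) * ‖x i‖ ^ 2 + ∑ j, w (.inr j) * ‖y j‖ ^ 2

namespace DominatedBy

variable {B : Matrix m n 𝕜} {w : m ⊕ n → ℝ}

lemma two_re_mul_le (hB : DominatedBy B w) (i : m) (j : n) (a b : 𝕜) :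
    2 * re (star a * B i j * b) ≤ w (.inl i) * ‖a‖ ^ 2 + w (.inr j) * ‖b‖ ^ 2 := by
  classical
  simpa [Pi.single_apply, apply_ite] using hB (Pi.single i a) (Pi.single j b)

lemma weight_nonneg (hB : DominatedBy B w) (k : m ⊕ n) : 0 ≤ w k := by
  classical
  cases k with
  | inl i => simpa [Pi.single_apply, apply_ite] using hB (Pi.single i 1) 0
  | inr j => simpa [Pi.single_apply, apply_ite] using hB 0 (Pi.single j 1)

lemma norm_sq_le (hB : DominatedBy B w) (i : m) (j : n) :
    ‖B i j‖ ^ 2 ≤ w (.inl i) * w (.inr j) := by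
  have hquad (r : ℝ) :
      0 ≤ w (.inr j) * (r * r) + -2 * ‖B i j‖ * r + w (.inl i) := by
    obtain ⟨c, hc, hcB⟩ := RCLike.exists_norm_eq_mul_self (B i j)
    have hBc : star (1 : 𝕜) * B i j * (r * c) = ((‖B i j‖ * r : ℝ) : 𝕜) := by
      rw [RCLike.ofReal_mul, hcB, star_one]
      ring
    have h := hB.two_re_mul_le i j 1 (r * c)
    rw [hBc, RCLike.ofReal_re] at h
    simp only [norm_one, norm_mul, RCLike.norm_ofReal, hc, mul_one, one_pow, sq_abs] at h
    linarith
  have hdisc := discrim_le_zero hquad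
  rw [discrim] at hdisc
  linarith

variable (B w) in
/-- The contraction `A` in the factorization `B = √s * A * √t` of a matrix dominated by the diagonal
weights `w = (s, t)`. Where a weight vanishes, `0⁻¹ = 0` sets the corresponding row or column of
`A` to zero. -/
noncomputable def normalize : Matrix m n 𝕜 :=
  of fun i j => ((√(w (.inl i)))⁻¹ : ℝ) * B i j * ((√(w (.inr j)))⁻¹ : ℝ)

lemma sqrt_mul_normalize_mul_sqrt (hB : DominatedBy B w) (i : m) (j : n) :
    √(w (.inl i)) * normalize B w i j * √(w (.inr j)) = B i j := by
  by_cases h : √(w (.inl i)) * √(w (.inr j)) = 0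
  · have hw : w (.inl i) * w (.inr j) = 0 := by
      rw [← Real.sqrt_mul (hB.weight_nonneg _)] at h
      exact (Real.sqrt_eq_zero (mul_nonneg (hB.weight_nonneg _) (hB.weight_nonneg _))).1 h
    have hBij : B i j = 0 := by simpa [hw] using hB.norm_sq_le i j
    simp [normalize, hBij]
  · obtain ⟨hi, hj⟩ := mul_ne_zero_iff.1 h
    have hi' : (√(w (.inl i)) : 𝕜) ≠ 0 := RCLike.ofReal_ne_zero.2 hi
    have hj' : (√(w (.inr j)) : 𝕜) ≠ 0 := RCLike.ofReal_ne_zero.2 hj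
    simp only [normalize, of_apply, RCLike.ofReal_inv]
    field_simp

lemma l2_opNorm_normalize_le_one [DecidableEq n] (hB : DominatedBy B w) : ‖normalize B w‖ ≤ 1 := by
  refine l2_opNorm_le_of_re_inner_le zero_le_one fun u v hu hv => ?_
  have hweight (k : m ⊕ n) (a : 𝕜) : w k * ‖((√(w k))⁻¹ : ℝ) * a‖ ^ 2 ≤ ‖a‖ ^ 2 := by
    rw [norm_mul, mul_pow, RCLike.norm_ofReal, sq_abs, inv_pow, Real.sq_sqrt (hB.weight_nonneg k),
      ← mul_assoc]
    exact mul_le_of_le_one_left (sq_nonneg _) mul_inv_le_one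
  suffices 2 * re ⟪u, toEuclideanLin (normalize B w) v⟫_𝕜 ≤ 2 by linarith
  calc 2 * re ⟪u, toEuclideanLin (normalize B w) v⟫_𝕜
      = 2 * re (∑ i, ∑ j, star (((√(w (.inl i)))⁻¹ : ℝ) * u i) * B i j *
          (((√(w (.inr j)))⁻¹ : ℝ) * v j)) := by
        rw [inner_toEuclideanLin_eq_sum]
        simp only [normalize, of_apply, star_mul', RCLike.star_def, RCLike.conj_ofReal]
        refine congrArg (2 * re ·) ?_
        refine Finset.sum_congr rfl fun i _ => Finset.sum_congr rfl fun j _ => ?_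
        ring
    _ ≤ ∑ i, w (.inl i) * ‖((√(w (.inl i)))⁻¹ : ℝ) * u i‖ ^ 2 +
          ∑ j, w (.inr j) * ‖((√(w (.inr j)))⁻¹ : ℝ) * v j‖ ^ 2 := hB _ _
    _ ≤ ∑ i, ‖u i‖ ^ 2 + ∑ j, ‖v j‖ ^ 2 := by
        gcongr with i _ j _
        · exact hweight (.inl i) (u i)
        · exact hweight (.inr j) (v j)
    _ = 2 := by rw [← EuclideanSpace.norm_sq_eq, ← EuclideanSpace.norm_sq_eq, hu, hv]; norm_num

lemma two_re_sum_mul_le [DecidableEq n] (hB : DominatedBy B w) (X : Matrix m n 𝕜) :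
    2 * re (∑ i, ∑ j, B i j * X i j) ≤ ‖X ⊙ normalize B w‖ * ∑ k, w k := by
  let u : EuclideanSpace 𝕜 m := WithLp.toLp 2 fun i => (√(w (.inl i)) : 𝕜)
  let v : EuclideanSpace 𝕜 n := WithLp.toLp 2 fun j => (√(w (.inr j)) : 𝕜)
  have hinner : ∑ i, ∑ j, B i j * X i j = ⟪u, toEuclideanLin (X ⊙ normalize B w) v⟫_𝕜 := by
    rw [inner_toEuclideanLin_eq_sum]
    refine Finset.sum_congr rfl fun i _ => Finset.sum_congr rfl fun j _ => ?_
    rw [← hB.sqrt_mul_normalize_mul_sqrt i j]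
    simp only [u, v, hadamard_apply, RCLike.star_def, RCLike.conj_ofReal]
    ring
  have hw : ‖u‖ ^ 2 + ‖v‖ ^ 2 = ∑ k, w k := by
    simp [u, v, EuclideanSpace.norm_sq_eq, Real.sq_sqrt (hB.weight_nonneg _)]
  calc 2 * re (∑ i, ∑ j, B i j * X i j)
      ≤ 2 * (‖X ⊙ normalize B w‖ * (‖u‖ * ‖v‖)) := by
        rw [hinner]
        gcongr
        exact (RCLike.re_le_norm _).trans (norm_inner_toEuclideanLin_le _ _ _)
    _ = ‖X ⊙ normalize B w‖ * (2 * ‖u‖ * ‖v‖) := by ring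
    _ ≤ ‖X ⊙ normalize B w‖ * ∑ k, w k := by
        rw [← hw]
        gcongr
        exact two_mul_le_add_sq _ _

end DominatedBy

lemma dominatedBy_of_forall_posSemidef {B : Matrix m n 𝕜} {w : m ⊕ n → ℝ}
    (h : ∀ Z : Matrix (m ⊕ n) (m ⊕ n) 𝕜, Z.PosSemidef →
      2 * re (∑ i, ∑ j, B i j * Z.toBlocks₁₂ i j) ≤ ∑ k, w k * re (Z k k)) :
    DominatedBy B w := by
  intro x y
  let z : m ⊕ n → 𝕜 := Sum.elim x y
  have hz := h (vecMulVec (star z) z) (posSemidef_vecMulVec_star_self z)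
  have hdiag (k) : re (vecMulVec (star z) z k k) = ‖z k‖ ^ 2 := by
    rw [vecMulVec_apply, Pi.star_apply, RCLike.star_def, RCLike.conj_mul, ← RCLike.ofReal_pow,
      RCLike.ofReal_re]
  have hcorner (i j) : B i j * (vecMulVec (star z) z).toBlocks₁₂ i j =
      star (x i) * B i j * y j := by
    simp only [toBlocks₁₂, of_apply, vecMulVec_apply, z, Pi.star_apply, Sum.elim_inl, Sum.elim_inr]
    ring
  simpa only [hdiag, hcorner, Fintype.sum_sum_type, z, Sum.elim_inl, Sum.elim_inr] using hz

theorem exists_posSemidef_toBlocks₁₂_eq (X : Matrix m n 𝕜) (d : m ⊕ n → ℝ)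
    (h : ∀ (B : Matrix m n 𝕜) (w : m ⊕ n → ℝ), DominatedBy B w →
      2 * re (∑ i, ∑ j, B i j * X i j) ≤ ∑ k, w k * d k) :
    ∃ Z : Matrix (m ⊕ n) (m ⊕ n) 𝕜, Z.PosSemidef ∧ Z.toBlocks₁₂ = X ∧ ∀ k, re (Z k k) = d k := by
  suffices hmem : (X, d) ∈ gramCone 𝕜 m n by
    obtain ⟨Z, hZ, hZX⟩ := hmem
    exact ⟨Z, nonneg_iff_posSemidef.1 hZ, congrArg Prod.fst hZX, congrFun (congrArg Prod.snd hZX)⟩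
  by_contra hmem
  have : LocallyConvexSpace ℝ (Matrix m n 𝕜) := Pi.locallyConvexSpace
  obtain ⟨f, hf, hfX⟩ := (gramCone 𝕜 m n).hyperplane_separation_point hmem
  obtain ⟨B, w, hBw⟩ := exists_dual_prod_apply_eq_sum_sub f.toLinearMap
  simp only [ContinuousLinearMap.coe_coe] at hBw
  rw [hBw] at hfX
  have hB : DominatedBy B w := by
    refine dominatedBy_of_forall_posSemidef fun Z hZ => ?_
    have hfZ : 0 ≤ f (Z.toBlocks₁₂, fun k => re (Z k k)) :=
      hf _ ⟨Z, nonneg_iff_posSemidef.2 hZ, rfl⟩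
    rw [hBw] at hfZ
    exact sub_nonneg.1 hfZ
  linarith [h B w hB]

section SchurNorm

variable {l m n : ℕ}

lemma colNorm_nonneg (L : Matrix (Fin l) (Fin m) ℂ) : 0 ≤ colNorm L :=
  Real.iSup_nonneg fun _ => Real.sqrt_nonneg _

lemma sum_norm_sq_le_colNorm_sq (L : Matrix (Fin l) (Fin m) ℂ) (j : Fin m) :
    ∑ i, ‖L i j‖ ^ 2 ≤ colNorm L ^ 2 :=
  (Real.sqrt_le_left (colNorm_nonneg L)).1 <|
    le_ciSup (f := fun j => √(∑ i, ‖L i j‖ ^ 2)) (Set.finite_range _).bddAbove j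

lemma colNorm_le_sqrt {L : Matrix (Fin l) (Fin m) ℂ} {c : ℝ} (h : ∀ j, ∑ i, ‖L i j‖ ^ 2 ≤ c) :
    colNorm L ≤ √c :=
  Real.iSup_le (fun j => Real.sqrt_le_sqrt (h j)) (Real.sqrt_nonneg _)

lemma schurNorm_nonneg (X : Matrix (Fin m) (Fin n) ℂ) : 0 ≤ schurNorm X :=
  Real.iSup_nonneg fun _ => norm_nonneg _

lemma opNorm_hadamard_conjTranspose_mul_le (L : Matrix (Fin l) (Fin m) ℂ)
    (R : Matrix (Fin l) (Fin n) ℂ) {A : Matrix (Fin m) (Fin n) ℂ} (hA : opNorm A ≤ 1) :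
    opNorm ((Lᴴ * R) ⊙ A) ≤ colNorm L * colNorm R := by
  have hnonneg : 0 ≤ colNorm L * colNorm R := mul_nonneg (colNorm_nonneg L) (colNorm_nonneg R)
  calc opNorm ((Lᴴ * R) ⊙ A) ≤ opNorm A * (colNorm L * colNorm R) :=
        l2_opNorm_hadamard_conjTranspose_mul_le (colNorm_nonneg L) (colNorm_nonneg R)
          (sum_norm_sq_le_colNorm_sq L) (sum_norm_sq_le_colNorm_sq R) A
    _ ≤ colNorm L * colNorm R := mul_le_of_le_one_left hnonneg hA

theorem schurNorm_conjTranspose_mul_le (L : Matrix (Fin l) (Fin m) ℂ)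
    (R : Matrix (Fin l) (Fin n) ℂ) : schurNorm (Lᴴ * R) ≤ colNorm L * colNorm R :=
  Real.iSup_le (fun A => opNorm_hadamard_conjTranspose_mul_le L R A.2)
    (mul_nonneg (colNorm_nonneg L) (colNorm_nonneg R))

lemma opNorm_hadamard_le_schurNorm (X : Matrix (Fin m) (Fin n) ℂ) {A : Matrix (Fin m) (Fin n) ℂ}
    (hA : opNorm A ≤ 1) : opNorm (X ⊙ A) ≤ schurNorm X := by
  refine le_ciSup (f := fun A : {A // opNorm A ≤ 1} => opNorm (X ⊙ A.1))
    ⟨colNorm (1 : Matrix (Fin m) (Fin m) ℂ) * colNorm X, ?_⟩ ⟨A, hA⟩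
  rintro _ ⟨A, rfl⟩
  simpa using opNorm_hadamard_conjTranspose_mul_le 1 X A.2

theorem exists_posSemidef_diag_eq_schurNorm (X : Matrix (Fin m) (Fin n) ℂ) :
    ∃ Z : Matrix (Fin m ⊕ Fin n) (Fin m ⊕ Fin n) ℂ,
      Z.PosSemidef ∧ Z.toBlocks₁₂ = X ∧ ∀ k, re (Z k k) = schurNorm X := by
  refine exists_posSemidef_toBlocks₁₂_eq X (fun _ => schurNorm X) fun B w hB => ?_
  calc 2 * re (∑ i, ∑ j, B i j * X i j) ≤ opNorm (X ⊙ DominatedBy.normalize B w) * ∑ k, w k :=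
        hB.two_re_sum_mul_le X
    _ ≤ schurNorm X * ∑ k, w k := by
        gcongr
        · exact Finset.sum_nonneg fun k _ => hB.weight_nonneg k
        · exact opNorm_hadamard_le_schurNorm X hB.l2_opNorm_normalize_le_one
    _ = ∑ k, w k * schurNorm X := by rw [mul_comm, Finset.sum_mul]

theorem exists_inner_eq_and_norm_sq_eq_schurNorm (X : Matrix (Fin m) (Fin n) ℂ) :
    ∃ (x : Fin m → EuclideanSpace ℂ (Fin m ⊕ Fin n))
      (y : Fin n → EuclideanSpace ℂ (Fin m ⊕ Fin n)),
      (∀ i j, ⟪x i, y j⟫_ℂ = X i j) ∧ (∀ i, ‖x i‖ ^ 2 = schurNorm X) ∧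
        ∀ j, ‖y j‖ ^ 2 = schurNorm X := by
  obtain ⟨Z, hZ, hZX, hdiag⟩ := exists_posSemidef_diag_eq_schurNorm X
  obtain ⟨v, rfl⟩ := exists_gram_eq_of_posSemidef hZ
  have hv (k) : ‖v k‖ ^ 2 = schurNorm X := by
    rw [← hdiag k, gram_apply, inner_self_eq_norm_sq]
  exact ⟨v ∘ .inl, v ∘ .inr, fun i j => congrFun₂ hZX i j, fun i => hv (.inl i),
    fun j => hv (.inr j)⟩

end SchurNorm

/-- Norm optimal factorization of a Schur multiplier: `X = Lᴴ * R` with `L`, `R` of the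
same rank as `X` and `‖L‖_c ‖R‖_c = ‖S_X‖`. -/
theorem exists_schur_optimal_factorization
    (m n : ℕ) (X : Matrix (Fin m) (Fin n) ℂ) :
    ∃ (L : Matrix (Fin X.rank) (Fin m) ℂ) (R : Matrix (Fin X.rank) (Fin n) ℂ),
      L.rank = X.rank ∧ R.rank = X.rank ∧ X = Lᴴ * R ∧
      colNorm L * colNorm R = schurNorm X := by
  obtain ⟨x, y, hxy, hx, hy⟩ := exists_inner_eq_and_norm_sq_eq_schurNorm X
  obtain ⟨L, R, hX, hL, hR⟩ := exists_conjTranspose_mul_eq_of_inner X x y hxy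
  obtain ⟨hLrank, hRrank⟩ := rank_eq_card_of_rank_conjTranspose_mul_eq (L := L) (R := R)
    (by rw [← hX, Fintype.card_fin])
  rw [Fintype.card_fin] at hLrank hRrank
  have hcolL : colNorm L ≤ √(schurNorm X) := colNorm_le_sqrt fun i => (hL i).trans_eq (hx i)
  have hcolR : colNorm R ≤ √(schurNorm X) := colNorm_le_sqrt fun j => (hR j).trans_eq (hy j)
  refine ⟨L, R, hLrank, hRrank, hX, le_antisymm ?_ ?_⟩
  · calc colNorm L * colNorm R ≤ √(schurNorm X) * √(schurNorm X) :=
          mul_le_mul hcolL hcolR (colNorm_nonneg R) (Real.sqrt_nonneg _)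
      _ = schurNorm X := Real.mul_self_sqrt (schurNorm_nonneg X)
  · calc schurNorm X = schurNorm (Lᴴ * R) := congrArg schurNorm hX
      _ ≤ colNorm L * colNorm R := schurNorm_conjTranspose_mul_le L R
end

section
/- Let X be an m×n complex matrix and let l = min(m, n). Then ‖T_X‖ ≤ 1 if and only if there exist γ ∈ ℂᵐ with ‖γ‖₂ ≤ 1, an l×m complex matrix L with ‖L‖_c ≤ 1, and an l×n complex matrix R with ‖R‖_c ≤ 1, such that X = Δ_m(γ) Lᴴ R. -/
open Matrix BigOperators

/-- The Euclidean norm of a complex vector. -/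
noncomputable def eNorm {n : ℕ} (ξ : Fin n → ℂ) : ℝ :=
  Real.sqrt (∑ j, ‖ξ j‖ ^ 2)

/-- The norm of the bilinear map `T_X : (a, B) ↦ (∑_i a_i X_{ij} B_{ij})_j`, the
supremum over `max_i |a_i| ≤ 1` and `‖B‖_∞ ≤ 1` of `‖T_X(a,B)‖₂`. -/
noncomputable def TxNorm {m n : ℕ} (X : Matrix (Fin m) (Fin n) ℂ) : ℝ :=
  ⨆ p : {p : (Fin m → ℂ) × Matrix (Fin m) (Fin n) ℂ //
      (∀ i, ‖p.1 i‖ ≤ 1) ∧ opNorm p.2 ≤ 1},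
    eNorm (fun j => ∑ i, p.1.1 i * X i j * p.1.2 i j)

/-!
`‖T_X‖ ≤ 1` holds exactly when `X` is a cross Gram matrix `X i j = ⟪x i, y j⟫` with
`∑ ‖x i‖² ≤ 1` and `‖y j‖ ≤ 1`; a factorization `X = Δ(γ) Lᴴ R` is such a representation with
`γ i = ‖x i‖`, the columns of `L` being the normalized `x i` and those of `R` the `y j`.

A cross Gram matrix satisfies the norm bound because a contraction acting on tuples of vectors is
still a contraction, followed by Cauchy–Schwarz. For the converse, consider the partially specified
matrix `[[?, X], [Xᴴ, ?]]` whose first diagonal block is only required to have trace `1` and whose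
second one is only required to have unit diagonal entries. Pairing with it is a well-defined linear
functional on the block matrices `[[c • 1, Y], [Y', diagonal d]]`. If such a matrix is positive
semidefinite, then `Y = √c • B * diagonal √d` with `B` a contraction, so `‖T_X‖ ≤ 1` and AM-GM make
the functional positive. By M. Riesz' extension theorem it extends to a positive functional on all
matrices, whose coefficients form a positive semidefinite, hence Gram, matrix completing the partial
one. Projecting orthogonally onto the span of the smaller of the two families `x`, `y` brings the
dimension down to `min m n`.
-/

section

open scoped Matrix.Norms.L2Operator ComplexOrder MatrixOrder InnerProductSpace
open WithLp (toLp)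

variable {𝕜 ι κ l K : Type*} [RCLike 𝕜]

section CrossGram

variable [Fintype ι] [Fintype κ]
  {E : Type*} [NormedAddCommGroup E] [InnerProductSpace 𝕜 E]

theorem sum_norm_sq_mulVec_le [DecidableEq ι] (A : Matrix κ ι 𝕜) (v : ι → 𝕜) :
    ∑ j, ‖(A *ᵥ v) j‖ ^ 2 ≤ ‖A‖ ^ 2 * ∑ i, ‖v i‖ ^ 2 := by
  have h := pow_le_pow_left₀ (norm_nonneg _) (A.l2_opNorm_mulVec (toLp 2 v)) 2
  simpa [mul_pow, EuclideanSpace.norm_sq_eq] using h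

theorem sum_norm_sq_sum_smul_le [FiniteDimensional 𝕜 E] [DecidableEq ι] (A : Matrix κ ι 𝕜)
    (x : ι → E) :
    ∑ j, ‖∑ i, A j i • x i‖ ^ 2 ≤ ‖A‖ ^ 2 * ∑ i, ‖x i‖ ^ 2 := by
  let b := stdOrthonormalBasis 𝕜 E
  calc ∑ j, ‖∑ i, A j i • x i‖ ^ 2
    _ = ∑ k, ∑ j, ‖(A *ᵥ fun i => ⟪b k, x i⟫_𝕜) j‖ ^ 2 := by
      rw [Finset.sum_comm]
      simp_rw [← b.sum_sq_norm_inner_right, inner_sum, inner_smul_right, mulVec, dotProduct]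
    _ ≤ ∑ k, ‖A‖ ^ 2 * ∑ i, ‖⟪b k, x i⟫_𝕜‖ ^ 2 :=
      Finset.sum_le_sum fun k _ => sum_norm_sq_mulVec_le A _
    _ = ‖A‖ ^ 2 * ∑ i, ‖x i‖ ^ 2 := by
      rw [← Finset.mul_sum, Finset.sum_comm]
      simp_rw [b.sum_sq_norm_inner_right]

theorem sum_norm_sq_sum_inner_mul_le [FiniteDimensional 𝕜 E] [DecidableEq κ]
    (x : ι → E) {y : κ → E} (hy : ∀ j, ‖y j‖ ≤ 1) (B : Matrix ι κ 𝕜) :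
    ∑ j, ‖∑ i, ⟪x i, y j⟫_𝕜 * B i j‖ ^ 2 ≤ ‖B‖ ^ 2 * ∑ i, ‖x i‖ ^ 2 := by
  classical
  have hinner (j : κ) : ∑ i, ⟪x i, y j⟫_𝕜 * B i j = ⟪∑ i, Bᴴ j i • x i, y j⟫_𝕜 := by
    simp [sum_inner, inner_smul_left, mul_comm]
  calc ∑ j, ‖∑ i, ⟪x i, y j⟫_𝕜 * B i j‖ ^ 2
    _ ≤ ∑ j, ‖∑ i, Bᴴ j i • x i‖ ^ 2 := by
      gcongr with j
      rw [hinner]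
      exact (norm_inner_le_norm _ _).trans (mul_le_of_le_one_right (norm_nonneg _) (hy j))
    _ ≤ ‖B‖ ^ 2 * ∑ i, ‖x i‖ ^ 2 := by
      simpa only [l2_opNorm_conjTranspose] using sum_norm_sq_sum_smul_le Bᴴ x

end CrossGram

section Contraction

variable [Fintype ι] [Fintype κ] [DecidableEq ι] [DecidableEq κ]

theorem exists_l2_opNorm_le_one_eq_mul_diagonal_sqrt [Fintype K] {Q : Matrix K ι 𝕜} {β : ι → ℝ}
    (hQ : Qᴴ * Q = diagonal fun i => (β i : 𝕜)) :
    ∃ U : Matrix K ι 𝕜, ‖U‖ ≤ 1 ∧ Q = U * diagonal fun i => ((√(β i) : ℝ) : 𝕜) := by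
  have hβ (i : ι) : ∑ k, ‖Q k i‖ ^ 2 = β i := by
    have h := congrFun₂ hQ i i
    simp only [mul_apply, conjTranspose_apply, RCLike.star_def, RCLike.conj_mul,
      diagonal_apply_eq] at h
    exact_mod_cast h
  have hβ_nonneg (i : ι) : 0 ≤ β i := hβ i ▸ by positivity
  set D : Matrix ι ι 𝕜 := diagonal fun i => (((√(β i))⁻¹ : ℝ) : 𝕜) with hD
  refine ⟨Q * D, ?_, ?_⟩
  · have hUU : (Q * D)ᴴ * (Q * D) = diagonal fun i => ((β i / β i : ℝ) : 𝕜) := by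
      rw [conjTranspose_mul, Matrix.mul_assoc, ← Matrix.mul_assoc Qᴴ, hQ, hD,
        diagonal_conjTranspose, diagonal_mul_diagonal, diagonal_mul_diagonal]
      congr 1 with i
      have : (√(β i))⁻¹ * (β i * (√(β i))⁻¹) = β i / β i := by
        rw [mul_left_comm, ← mul_inv, Real.mul_self_sqrt (hβ_nonneg i), div_eq_mul_inv]
      simpa using congrArg ((↑) : ℝ → 𝕜) this
    have hnorm : ‖Q * D‖ * ‖Q * D‖ ≤ 1 := by
      rw [← l2_opNorm_conjTranspose_mul_self, hUU, l2_opNorm_diagonal]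
      refine (pi_norm_le_iff_of_nonneg zero_le_one).2 fun i => ?_
      rw [RCLike.norm_ofReal, abs_of_nonneg (div_nonneg (hβ_nonneg i) (hβ_nonneg i))]
      exact div_self_le_one _
    nlinarith [norm_nonneg (Q * D)]
  · ext k i
    rw [Matrix.mul_assoc, hD, diagonal_mul_diagonal, mul_diagonal, ← RCLike.ofReal_mul]
    obtain hi | hi := eq_or_ne (√(β i)) 0
    · have hcol : ∑ k, ‖Q k i‖ ^ 2 = 0 := by
        rw [hβ, ← Real.sqrt_eq_zero (hβ_nonneg i), hi]
      rw [Finset.sum_eq_zero_iff_of_nonneg fun _ _ => by positivity] at hcol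
      have hQki : Q k i = 0 := by simpa using hcol k
      simp [hQki]
    · simp [inv_mul_cancel₀ hi]

theorem exists_l2_opNorm_le_one_eq_of_posSemidef_fromBlocks_diagonal {α : ι → ℝ} {β : κ → ℝ}
    {Y : Matrix ι κ 𝕜}
    (h : (fromBlocks (diagonal fun i => (α i : 𝕜)) Y Yᴴ (diagonal fun j => (β j : 𝕜))).PosSemidef) :
    ∃ B : Matrix ι κ 𝕜, ‖B‖ ≤ 1 ∧
      Y = diagonal (fun i => ((√(α i) : ℝ) : 𝕜)) * B * diagonal fun j => ((√(β j) : ℝ) : 𝕜) := by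
  obtain ⟨A, hA⟩ := CStarAlgebra.nonneg_iff_eq_star_mul_self.mp h.nonneg
  let P := A.submatrix id Sum.inl
  let Q := A.submatrix id Sum.inr
  have hP : Pᴴ * P = diagonal fun i => (α i : 𝕜) := (congrArg toBlocks₁₁ hA).symm
  have hPQ : Pᴴ * Q = Y := (congrArg toBlocks₁₂ hA).symm
  have hQ : Qᴴ * Q = diagonal fun j => (β j : 𝕜) := (congrArg toBlocks₂₂ hA).symm
  obtain ⟨U, hU, hPU⟩ := exists_l2_opNorm_le_one_eq_mul_diagonal_sqrt hP
  obtain ⟨W, hW, hQW⟩ := exists_l2_opNorm_le_one_eq_mul_diagonal_sqrt hQ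
  refine ⟨Uᴴ * W, (l2_opNorm_mul _ _).trans ?_, ?_⟩
  · rw [l2_opNorm_conjTranspose]
    exact mul_le_one₀ hU (norm_nonneg _) hW
  · rw [← hPQ, hPU, hQW, conjTranspose_mul, diagonal_conjTranspose]
    simp [Matrix.mul_assoc, Pi.star_def]

theorem two_mul_norm_sum_mul_le_of_posSemidef_fromBlocks [Nonempty ι] {X : Matrix ι κ 𝕜}
    (hX : ∀ B : Matrix ι κ 𝕜, ‖B‖ ≤ 1 → ∑ j, ‖∑ i, X i j * B i j‖ ^ 2 ≤ 1)
    {Y : Matrix ι κ 𝕜} {s : ℝ} {β : κ → ℝ}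
    (hY : (fromBlocks (diagonal fun _ => (s : 𝕜)) Y Yᴴ (diagonal fun j => (β j : 𝕜))).PosSemidef) :
    2 * ‖∑ i, ∑ j, X i j * Y i j‖ ≤ s + ∑ j, β j := by
  have hs : 0 ≤ s := by
    simpa using hY.diag_nonneg (i := Sum.inl (Classical.arbitrary ι))
  have hβ (j : κ) : 0 ≤ β j := by simpa using hY.diag_nonneg (i := Sum.inr j)
  obtain ⟨B, hB, hYB⟩ := exists_l2_opNorm_le_one_eq_of_posSemidef_fromBlocks_diagonal hY
  have hterm (j : κ) : ‖∑ i, X i j * Y i j‖ = √s * √(β j) * ‖∑ i, X i j * B i j‖ := by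
    have : ∑ i, X i j * Y i j = (√s : 𝕜) * √(β j) * ∑ i, X i j * B i j := by
      rw [Finset.mul_sum]
      refine Finset.sum_congr rfl fun i _ => ?_
      rw [hYB, mul_diagonal, diagonal_mul]
      ring
    rw [this, norm_mul, norm_mul, RCLike.norm_ofReal, RCLike.norm_ofReal,
      abs_of_nonneg (Real.sqrt_nonneg _), abs_of_nonneg (Real.sqrt_nonneg _)]
  calc 2 * ‖∑ i, ∑ j, X i j * Y i j‖
    _ ≤ ∑ j, 2 * (√s * √(β j) * ‖∑ i, X i j * B i j‖) := by
      rw [Finset.sum_comm, ← Finset.mul_sum]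
      gcongr
      exact (norm_sum_le _ _).trans_eq (Finset.sum_congr rfl fun j _ => hterm j)
    _ ≤ ∑ j, (s * ‖∑ i, X i j * B i j‖ ^ 2 + β j) := by
      gcongr with j
      have := two_mul_le_add_sq (√s * ‖∑ i, X i j * B i j‖) √(β j)
      rw [mul_pow, Real.sq_sqrt hs, Real.sq_sqrt (hβ j)] at this
      linarith
    _ ≤ s + ∑ j, β j := by
      rw [Finset.sum_add_distrib, ← Finset.mul_sum]
      gcongr
      exact mul_le_of_le_one_right hs (hX B hB)

end Contraction

section PositiveExtension

/-- The cone of accretive matrices, those with positive semidefinite Hermitian part. It extends the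
cone of positive semidefinite matrices by the skew-Hermitian ones, so that translates by multiples
of `1` cover the whole matrix space, as M. Riesz' extension theorem over `ℝ` requires. -/
def accretiveCone (𝕜 K : Type*) [RCLike 𝕜] : PointedCone ℝ (Matrix K K 𝕜) where
  carrier := {M | (M + Mᴴ).PosSemidef}
  zero_mem' := by simp [PosSemidef.zero]
  add_mem' {M N} hM hN := by
    simpa only [Set.mem_ofPred_eq, conjTranspose_add, add_add_add_comm] using PosSemidef.add hM hN
  smul_mem' r M hM := by
    have h : (r.1 • (M + Mᴴ)).PosSemidef := PosSemidef.smul hM r.2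
    rwa [smul_add, ← star_trivial r.1, ← conjTranspose_smul, star_trivial] at h

theorem mem_accretiveCone {M : Matrix K K 𝕜} :
    M ∈ accretiveCone 𝕜 K ↔ (M + Mᴴ).PosSemidef :=
  Iff.rfl

theorem map_conjTranspose_of_re_nonneg {ψ : Module.Dual 𝕜 (Matrix K K 𝕜)}
    (hψ : ∀ M ∈ accretiveCone 𝕜 K, 0 ≤ RCLike.re (ψ M)) (M : Matrix K K 𝕜) :
    ψ Mᴴ = star (ψ M) := by
  have hre (N : Matrix K K 𝕜) : RCLike.re (ψ Nᴴ) = RCLike.re (ψ N) := by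
    have h₁ := hψ (N - Nᴴ) (by simp [mem_accretiveCone, PosSemidef.zero])
    have h₂ := hψ (Nᴴ - N) (by simp [mem_accretiveCone, PosSemidef.zero])
    rw [map_sub, map_sub] at h₁ h₂
    linarith
  refine RCLike.ext (by simpa using hre M) ?_
  have him := hre ((RCLike.I : 𝕜) • M)
  rw [conjTranspose_smul, map_smul ψ, map_smul ψ] at him
  simpa using him

variable [DecidableEq K]

theorem exists_smul_one_add_mem_accretiveCone [Finite K] (M : Matrix K K 𝕜) :
    ∃ r : ℝ, r • (1 : Matrix K K 𝕜) + M ∈ accretiveCone 𝕜 K := by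
  have := Fintype.ofFinite K
  obtain ⟨c, hc⟩ := (M + Mᴴ).finite_real_spectrum.bddBelow
  have hle : algebraMap ℝ (Matrix K K 𝕜) c ≤ M + Mᴴ :=
    algebraMap_le_of_le_spectrum (fun _ hx => hc hx) (isHermitian_add_transpose_self M)
  have heq : (-c / 2) • 1 + M + ((-c / 2) • 1 + M)ᴴ =
      M + Mᴴ - algebraMap ℝ (Matrix K K 𝕜) c := by
    rw [Algebra.algebraMap_eq_smul_one, conjTranspose_add, conjTranspose_smul, conjTranspose_one,
      star_trivial]
    module
  exact ⟨-c / 2, mem_accretiveCone.2 (heq ▸ Matrix.le_iff.1 hle)⟩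

theorem exists_extension_re_nonneg_of_mem_accretiveCone [Finite K]
    {V : Submodule 𝕜 (Matrix K K 𝕜)} (hV : 1 ∈ V) (φ : V →ₗ[𝕜] 𝕜)
    (hφ : ∀ M : V, (M : Matrix K K 𝕜) ∈ accretiveCone 𝕜 K → 0 ≤ RCLike.re (φ M)) :
    ∃ ψ : Module.Dual 𝕜 (Matrix K K 𝕜),
      (∀ M ∈ accretiveCone 𝕜 K, 0 ≤ RCLike.re (ψ M)) ∧ ∀ M : V, ψ M = φ M := by
  let f : Matrix K K 𝕜 →ₗ.[ℝ] ℝ := ⟨V.restrictScalars ℝ, RCLike.reLm ∘ₗ φ.restrictScalars ℝ⟩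
  obtain ⟨g, hgf, hg⟩ := riesz_extension (accretiveCone 𝕜 K) f hφ fun M => by
    obtain ⟨r, hr⟩ := exists_smul_one_add_mem_accretiveCone M
    exact ⟨⟨_, (V.restrictScalars ℝ).smul_mem r hV⟩, hr⟩
  have hg_re (M : V) : g M = RCLike.re (φ M) := hgf M
  let g' : Module.Dual ℝ (Matrix K K 𝕜) := g
  refine ⟨g'.extendRCLike, fun M hM => ?_, fun M => RCLike.ext ?_ ?_⟩
  · simpa only [Module.Dual.re_extendRCLike_apply] using hg M hM
  · rw [Module.Dual.re_extendRCLike_apply]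
    exact hg_re M
  · rw [Module.Dual.im_extendRCLike_apply]
    have hg_smul_I : g ((RCLike.I : 𝕜) • (M : Matrix K K 𝕜)) = _ := hg_re ((RCLike.I : 𝕜) • M)
    rw [hg_smul_I]
    simp

theorem posSemidef_map_single_of_re_nonneg [Finite K] {ψ : Module.Dual 𝕜 (Matrix K K 𝕜)}
    (hψ : ∀ M ∈ accretiveCone 𝕜 K, 0 ≤ RCLike.re (ψ M)) :
    (of fun k l => ψ (single k l 1)).PosSemidef := by
  have := Fintype.ofFinite K
  have hquad (v : K → 𝕜) : star v ⬝ᵥ (of fun k l => ψ (single k l 1)) *ᵥ v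
      = ψ (vecMulVec (star v) v) := by
    rw [matrix_eq_sum_single (vecMulVec (star v) v)]
    simp only [map_sum, dotProduct, mulVec, Finset.mul_sum, of_apply, vecMulVec_apply]
    refine Finset.sum_congr rfl fun k _ => Finset.sum_congr rfl fun l _ => ?_
    rw [← mul_one (star v k * v l), ← smul_eq_mul (_ * _), ← smul_single, map_smul, smul_eq_mul]
    ring
  refine .of_dotProduct_mulVec_nonneg ?_ fun v => ?_
  · ext k l
    rw [conjTranspose_apply, of_apply, of_apply, ← map_conjTranspose_of_re_nonneg hψ,
      conjTranspose_single, star_one]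
  · have hv := posSemidef_vecMulVec_star_self (R := 𝕜) v
    rw [hquad, RCLike.nonneg_iff]
    constructor
    · exact hψ _ (hv.add hv.conjTranspose)
    · rw [← RCLike.conj_eq_iff_im]
      exact (map_conjTranspose_of_re_nonneg hψ _).symm.trans (by rw [hv.1])

theorem exists_posSemidef_trace_transpose_mul_eq [Fintype K] {V : Submodule 𝕜 (Matrix K K 𝕜)}
    (hV_one : 1 ∈ V) (hV_star : ∀ M ∈ V, Mᴴ ∈ V) {Z : Matrix K K 𝕜} (hZ : Z.IsHermitian)
    (hpos : ∀ N ∈ V, N.PosSemidef → 0 ≤ RCLike.re (trace (Zᵀ * N))) :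
    ∃ Z' : Matrix K K 𝕜, Z'.PosSemidef ∧ ∀ M ∈ V, trace (Z'ᵀ * M) = trace (Zᵀ * M) := by
  let φ : V →ₗ[𝕜] 𝕜 := traceLinearMap K 𝕜 𝕜 ∘ₗ LinearMap.mulLeft 𝕜 Zᵀ ∘ₗ V.subtype
  have hφ (M : V) (hM : (M : Matrix K K 𝕜) ∈ accretiveCone 𝕜 K) : 0 ≤ RCLike.re (φ M) := by
    have htrace : trace (Zᵀ * (M : Matrix K K 𝕜)ᴴ) = star (trace (Zᵀ * (M : Matrix K K 𝕜))) := by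
      rw [← trace_conjTranspose, conjTranspose_mul, hZ.transpose.eq, trace_mul_comm]
    have h := hpos _ (V.add_mem M.2 (hV_star M M.2)) hM
    rw [Matrix.mul_add, trace_add, htrace, map_add, RCLike.star_def, RCLike.conj_re] at h
    change 0 ≤ RCLike.re (trace (Zᵀ * (M : Matrix K K 𝕜)))
    linarith
  obtain ⟨ψ, hψ, hψφ⟩ := exists_extension_re_nonneg_of_mem_accretiveCone hV_one φ hφ
  refine ⟨of fun k l => ψ (single k l 1), posSemidef_map_single_of_re_nonneg hψ, fun M hM => ?_⟩
  refine Eq.trans ?_ (hψφ ⟨M, hM⟩)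
  suffices traceLinearMap K 𝕜 𝕜 ∘ₗ LinearMap.mulLeft 𝕜 (of fun k l => ψ (single k l 1))ᵀ = ψ from
    DFunLike.congr_fun this M
  refine ext_linearMap _ fun k l => LinearMap.ext_ring ?_
  simp [trace_mul_single]

end PositiveExtension

section Blocks

/-- The space of block matrices whose diagonal blocks are a scalar matrix and a diagonal matrix.
A functional on it records the off-diagonal blocks of a matrix, the trace of its first diagonal
block and the diagonal of its second one. -/
def scalarDiagBlocks (𝕜 ι κ : Type*) [RCLike 𝕜] [DecidableEq ι] [DecidableEq κ] :
    Submodule 𝕜 (Matrix (ι ⊕ κ) (ι ⊕ κ) 𝕜) where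
  carrier := {M | ∃ c Y Y' d, M = fromBlocks (diagonal fun _ => c) Y Y' (diagonal d)}
  zero_mem' := ⟨0, 0, 0, 0, by simp [← Pi.zero_def]⟩
  add_mem' := by
    rintro _ _ ⟨c, Y, Y', d, rfl⟩ ⟨c₁, Y₁, Y₁', d₁, rfl⟩
    exact ⟨c + c₁, Y + Y₁, Y' + Y₁', d + d₁, by
      rw [fromBlocks_add, diagonal_add, diagonal_add]; rfl⟩
  smul_mem' := by
    rintro a _ ⟨c, Y, Y', d, rfl⟩
    exact ⟨a • c, a • Y, a • Y', a • d, by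
      rw [fromBlocks_smul, ← diagonal_smul, ← diagonal_smul]; rfl⟩

variable [DecidableEq ι] [DecidableEq κ]

theorem mem_scalarDiagBlocks {M : Matrix (ι ⊕ κ) (ι ⊕ κ) 𝕜} :
    M ∈ scalarDiagBlocks 𝕜 ι κ ↔
      ∃ c Y Y' d, M = fromBlocks (diagonal fun _ => c) Y Y' (diagonal d) :=
  Iff.rfl

theorem one_mem_scalarDiagBlocks : 1 ∈ scalarDiagBlocks 𝕜 ι κ :=
  mem_scalarDiagBlocks.2 ⟨1, 0, 0, 1, by simp⟩

theorem conjTranspose_mem_scalarDiagBlocks {M : Matrix (ι ⊕ κ) (ι ⊕ κ) 𝕜}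
    (hM : M ∈ scalarDiagBlocks 𝕜 ι κ) : Mᴴ ∈ scalarDiagBlocks 𝕜 ι κ := by
  obtain ⟨c, Y, Y', d, rfl⟩ := hM
  exact ⟨star c, Y'ᴴ, Yᴴ, star d, by
    rw [fromBlocks_conjTranspose, diagonal_conjTranspose, diagonal_conjTranspose]; rfl⟩

theorem exists_eq_fromBlocks_of_mem_scalarDiagBlocks {N : Matrix (ι ⊕ κ) (ι ⊕ κ) 𝕜}
    (hN : N ∈ scalarDiagBlocks 𝕜 ι κ) (hherm : N.IsHermitian) :
    ∃ (s : ℝ) (Y : Matrix ι κ 𝕜) (β : κ → ℝ),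
      N = fromBlocks (diagonal fun _ => (s : 𝕜)) Y Yᴴ (diagonal fun j => (β j : 𝕜)) := by
  obtain ⟨c, Y, Y', d, rfl⟩ := hN
  obtain ⟨hc, rfl, -, hd⟩ := isHermitian_fromBlocks_iff.1 hherm
  refine ⟨RCLike.re c, Y, fun j => RCLike.re (d j), ?_⟩
  congr 2 <;> ext k
  · simpa using (hc.coe_re_apply_self k).symm
  · simpa using (hd.coe_re_apply_self k).symm

/-- The Hermitian matrix `[[D, X], [Xᴴ, 1]]` with `D` scalar of trace `1` (for `ι` nonempty), which
encodes the prescribed part of the Gram matrix of unit vectors `y j` and vectors `x i` with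
`∑ ‖x i‖² = 1` and `X i j = ⟪x i, y j⟫`. It is only ever paired with `scalarDiagBlocks`, so any
Hermitian blocks with the same trace, resp. the same diagonal, would do. -/
noncomputable def partialGram [Fintype ι] (X : Matrix ι κ 𝕜) : Matrix (ι ⊕ κ) (ι ⊕ κ) 𝕜 :=
  fromBlocks (diagonal fun _ => (Fintype.card ι : 𝕜)⁻¹) X Xᴴ 1

theorem isHermitian_partialGram [Fintype ι] (X : Matrix ι κ 𝕜) : (partialGram X).IsHermitian :=
  .fromBlocks (isHermitian_diagonal_iff.2 fun _ => by simp [IsSelfAdjoint]) rfl isHermitian_one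

variable [Fintype ι] [Fintype κ]

theorem trace_transpose_mul_fromBlocks_diagonal (Z : Matrix (ι ⊕ κ) (ι ⊕ κ) 𝕜) (c : 𝕜)
    (Y : Matrix ι κ 𝕜) (Y' : Matrix κ ι 𝕜) (d : κ → 𝕜) :
    trace (Zᵀ * fromBlocks (diagonal fun _ => c) Y Y' (diagonal d)) =
      (∑ i, Z (.inl i) (.inl i)) * c + (∑ i, ∑ j, Z (.inl i) (.inr j) * Y i j) +
        (∑ i, ∑ j, Z (.inr j) (.inl i) * Y' j i) + ∑ j, Z (.inr j) (.inr j) * d j := by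
  simp only [trace, diag_apply, mul_apply, transpose_apply, Fintype.sum_sum_type,
    fromBlocks_apply₁₁, fromBlocks_apply₁₂, fromBlocks_apply₂₁, fromBlocks_apply₂₂,
    diagonal_apply, mul_ite, mul_zero, Finset.sum_ite_eq', Finset.mem_univ, if_true,
    Finset.sum_add_distrib, Finset.sum_mul]
  rw [Finset.sum_comm (f := fun j i => Z (.inl i) (.inr j) * Y i j)]
  ring

theorem eq_of_trace_transpose_mul_eq_on_scalarDiagBlocks {Z Z' : Matrix (ι ⊕ κ) (ι ⊕ κ) 𝕜}
    (h : ∀ M ∈ scalarDiagBlocks 𝕜 ι κ, trace (Z'ᵀ * M) = trace (Zᵀ * M)) :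
    (∑ i, Z' (.inl i) (.inl i) = ∑ i, Z (.inl i) (.inl i)) ∧
    (∀ i j, Z' (.inl i) (.inr j) = Z (.inl i) (.inr j)) ∧
    (∀ j, Z' (.inr j) (.inr j) = Z (.inr j) (.inr j)) := by
  refine ⟨?_, fun i j => ?_, fun j => ?_⟩
  · have h₁ := h _ (mem_scalarDiagBlocks.2 ⟨1, 0, 0, 0, rfl⟩)
    rw [trace_transpose_mul_fromBlocks_diagonal, trace_transpose_mul_fromBlocks_diagonal] at h₁
    simpa using h₁
  · have h₁ := h _ (mem_scalarDiagBlocks.2 ⟨0, single i j 1, 0, 0, rfl⟩)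
    rw [trace_transpose_mul_fromBlocks_diagonal, trace_transpose_mul_fromBlocks_diagonal] at h₁
    simpa [single_apply, ite_and] using h₁
  · have h₁ := h _ (mem_scalarDiagBlocks.2 ⟨0, 0, 0, Pi.single j 1, rfl⟩)
    rw [trace_transpose_mul_fromBlocks_diagonal, trace_transpose_mul_fromBlocks_diagonal] at h₁
    simpa [Pi.single_apply] using h₁

theorem re_trace_transpose_partialGram_mul [Nonempty ι] (X Y : Matrix ι κ 𝕜) (s : ℝ) (β : κ → ℝ) :
    RCLike.re (trace ((partialGram X)ᵀ *
      fromBlocks (diagonal fun _ => (s : 𝕜)) Y Yᴴ (diagonal fun j => (β j : 𝕜)))) =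
      s + 2 * RCLike.re (∑ i, ∑ j, X i j * Y i j) + ∑ j, β j := by
  have hstar : ∑ i, ∑ j, star (X i j) * star (Y i j) = star (∑ i, ∑ j, X i j * Y i j) := by
    simp [star_sum]
  rw [trace_transpose_mul_fromBlocks_diagonal]
  simp only [partialGram, fromBlocks_apply₁₁, fromBlocks_apply₁₂, fromBlocks_apply₂₁,
    fromBlocks_apply₂₂, conjTranspose_apply, diagonal_apply_eq, one_apply_eq, hstar, one_mul]
  generalize ∑ i, ∑ j, X i j * Y i j = S
  rw [Finset.sum_const, Finset.card_univ, nsmul_eq_mul, mul_inv_cancel₀ (by simp), one_mul]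
  simp only [map_add, map_sum, RCLike.ofReal_re, RCLike.star_def, RCLike.conj_re]
  ring

theorem re_trace_transpose_partialGram_mul_nonneg [Nonempty ι] {X : Matrix ι κ 𝕜}
    (hX : ∀ B : Matrix ι κ 𝕜, ‖B‖ ≤ 1 → ∑ j, ‖∑ i, X i j * B i j‖ ^ 2 ≤ 1)
    {N : Matrix (ι ⊕ κ) (ι ⊕ κ) 𝕜} (hN : N ∈ scalarDiagBlocks 𝕜 ι κ) (hpsd : N.PosSemidef) :
    0 ≤ RCLike.re (trace ((partialGram X)ᵀ * N)) := by
  obtain ⟨s, Y, β, rfl⟩ := exists_eq_fromBlocks_of_mem_scalarDiagBlocks hN hpsd.1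
  have hle := two_mul_norm_sum_mul_le_of_posSemidef_fromBlocks hX hpsd
  have hre := (abs_le.1 (RCLike.abs_re_le_norm (∑ i, ∑ j, X i j * Y i j))).1
  rw [re_trace_transpose_partialGram_mul]
  linarith

end Blocks

section GramCompletion

theorem exists_eq_gram_of_posSemidef [Fintype K] {Z : Matrix K K 𝕜} (hZ : Z.PosSemidef) :
    ∃ w : K → EuclideanSpace 𝕜 K, Z = gram 𝕜 w := by
  classical
  obtain ⟨A, rfl⟩ := CStarAlgebra.nonneg_iff_eq_star_mul_self.mp hZ.nonneg
  refine ⟨fun k => toLp 2 (A.col k), ?_⟩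
  rw [gram_eq_conjTranspose_mul (EuclideanSpace.basisFun K 𝕜)]
  rfl

theorem exists_eq_inner_of_sum_norm_sq_sum_mul_le [Fintype ι] [Fintype κ] [DecidableEq κ]
    {X : Matrix ι κ 𝕜}
    (hX : ∀ B : Matrix ι κ 𝕜, ‖B‖ ≤ 1 → ∑ j, ‖∑ i, X i j * B i j‖ ^ 2 ≤ 1) :
    ∃ (x : ι → EuclideanSpace 𝕜 (ι ⊕ κ)) (y : κ → EuclideanSpace 𝕜 (ι ⊕ κ)),
      ∑ i, ‖x i‖ ^ 2 ≤ 1 ∧ (∀ j, ‖y j‖ ≤ 1) ∧ ∀ i j, X i j = ⟪x i, y j⟫_𝕜 := by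
  classical
  obtain _ | _ := isEmpty_or_nonempty ι
  · exact ⟨0, 0, by simp, by simp, isEmptyElim⟩
  obtain ⟨Z, hZ_psd, hZ⟩ := exists_posSemidef_trace_transpose_mul_eq one_mem_scalarDiagBlocks
    (fun _ => conjTranspose_mem_scalarDiagBlocks) (isHermitian_partialGram X)
    fun N => re_trace_transpose_partialGram_mul_nonneg hX
  obtain ⟨w, rfl⟩ := exists_eq_gram_of_posSemidef hZ_psd
  obtain ⟨h₁₁, h₁₂, h₂₂⟩ := eq_of_trace_transpose_mul_eq_on_scalarDiagBlocks hZ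
  have hx : ∑ i, (‖w (.inl i)‖ ^ 2 : 𝕜) = 1 := by
    simpa [partialGram, gram_apply, inner_self_eq_norm_sq_to_K] using h₁₁
  have hy (j : κ) : (‖w (.inr j)‖ ^ 2 : 𝕜) = 1 := by
    simpa [partialGram, gram_apply, inner_self_eq_norm_sq_to_K] using h₂₂ j
  refine ⟨w ∘ .inl, w ∘ .inr, ?_, fun j => ?_, fun i j => (h₁₂ i j).symm⟩
  · exact le_of_eq (by exact_mod_cast hx)
  · exact (sq_le_one_iff₀ (norm_nonneg _)).1 (le_of_eq (by exact_mod_cast hy j))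

end GramCompletion

section Compression

variable [Fintype ι] [Fintype κ] [Fintype l]
  {E : Type*} [NormedAddCommGroup E] [InnerProductSpace 𝕜 E]

theorem exists_linearIsometry_euclideanSpace_of_finrank_le [FiniteDimensional 𝕜 E]
    (h : Module.finrank 𝕜 E ≤ Fintype.card l) : Nonempty (E →ₗᵢ[𝕜] EuclideanSpace 𝕜 l) := by
  obtain ⟨e⟩ : Nonempty (Fin (Module.finrank 𝕜 E) ↪ l) :=
    Function.Embedding.nonempty_of_card_le (by simpa using h)
  let b := stdOrthonormalBasis 𝕜 E
  let f := b.toBasis.constr 𝕜 (EuclideanSpace.basisFun l 𝕜 ∘ e)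
  have hf : f ∘ b.toBasis = EuclideanSpace.basisFun l 𝕜 ∘ e :=
    funext fun k => b.toBasis.constr_basis 𝕜 _ k
  exact ⟨f.isometryOfOrthonormal (v := b.toBasis) (by simp [b, b.orthonormal])
    (hf ▸ (EuclideanSpace.basisFun l 𝕜).orthonormal.comp e e.injective)⟩

theorem exists_norm_le_and_inner_eq_of_finrank_le (S : Submodule 𝕜 E) [FiniteDimensional 𝕜 S]
    (hS : Module.finrank 𝕜 S ≤ Fintype.card l) :
    ∃ T : E → EuclideanSpace 𝕜 l, (∀ v, ‖T v‖ ≤ ‖v‖) ∧ ∀ u ∈ S, ∀ v, ⟪T u, T v⟫_𝕜 = ⟪u, v⟫_𝕜 := by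
  obtain ⟨f⟩ := exists_linearIsometry_euclideanSpace_of_finrank_le hS
  refine ⟨fun v => f (S.orthogonalProjectionOnto v), fun v => ?_, fun u hu v => ?_⟩
  · rw [f.norm_map]
    exact S.norm_orthogonalProjectionOnto_apply_le v
  · rw [f.inner_map_map, S.orthogonalProjectionOnto_mem_subspace_eq_self ⟨u, hu⟩,
      S.inner_orthogonalProjectionOnto_eq_of_mem_left]

theorem exists_norm_le_and_inner_eq_of_min_card_le
    (h : min (Fintype.card ι) (Fintype.card κ) ≤ Fintype.card l) (x : ι → E) (y : κ → E) :
    ∃ (x' : ι → EuclideanSpace 𝕜 l) (y' : κ → EuclideanSpace 𝕜 l),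
      (∀ i, ‖x' i‖ ≤ ‖x i‖) ∧ (∀ j, ‖y' j‖ ≤ ‖y j‖) ∧
        ∀ i j, ⟪x' i, y' j⟫_𝕜 = ⟪x i, y j⟫_𝕜 := by
  obtain hι | hκ := min_le_iff.1 h
  · have := FiniteDimensional.span_of_finite 𝕜 (Set.finite_range x)
    obtain ⟨T, hT, hinner⟩ := exists_norm_le_and_inner_eq_of_finrank_le
      (Submodule.span 𝕜 (Set.range x)) ((finrank_range_le_card x).trans hι)
    exact ⟨T ∘ x, T ∘ y, fun i => hT (x i), fun j => hT (y j), fun i j =>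
      hinner (x i) (Submodule.subset_span ⟨i, rfl⟩) (y j)⟩
  · have := FiniteDimensional.span_of_finite 𝕜 (Set.finite_range y)
    obtain ⟨T, hT, hinner⟩ := exists_norm_le_and_inner_eq_of_finrank_le
      (Submodule.span 𝕜 (Set.range y)) ((finrank_range_le_card y).trans hκ)
    refine ⟨T ∘ x, T ∘ y, fun i => hT (x i), fun j => hT (y j), fun i j => ?_⟩
    rw [← inner_conj_symm, ← inner_conj_symm (x i)]
    exact congrArg _ (hinner (y j) (Submodule.subset_span ⟨j, rfl⟩) (x i))

end Compression

section Factorization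

variable [Fintype ι] [Fintype l] [DecidableEq ι]

theorem diagonal_mul_conjTranspose_mul_apply (γ : ι → 𝕜) (L : Matrix l ι 𝕜) (R : Matrix l κ 𝕜)
    (i : ι) (j : κ) :
    (diagonal γ * (Lᴴ * R)) i j = ⟪star (γ i) • toLp 2 (L.col i), toLp 2 (R.col j)⟫_𝕜 := by
  rw [diagonal_mul, inner_smul_left, EuclideanSpace.inner_toLp_toLp]
  simp [mul_apply, dotProduct, mul_comm]

theorem exists_factorization_iff_exists_eq_inner (X : Matrix ι κ 𝕜) :
    (∃ (γ : ι → 𝕜) (L : Matrix l ι 𝕜) (R : Matrix l κ 𝕜), ‖toLp 2 γ‖ ≤ 1 ∧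
        (∀ i, ‖toLp 2 (L.col i)‖ ≤ 1) ∧ (∀ j, ‖toLp 2 (R.col j)‖ ≤ 1) ∧
        X = diagonal γ * (Lᴴ * R)) ↔
      ∃ (x : ι → EuclideanSpace 𝕜 l) (y : κ → EuclideanSpace 𝕜 l),
        ∑ i, ‖x i‖ ^ 2 ≤ 1 ∧ (∀ j, ‖y j‖ ≤ 1) ∧ ∀ i j, X i j = ⟪x i, y j⟫_𝕜 := by
  constructor
  · rintro ⟨γ, L, R, hγ, hL, hR, rfl⟩
    refine ⟨fun i => star (γ i) • toLp 2 (L.col i), fun j => toLp 2 (R.col j), ?_, hR,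
      diagonal_mul_conjTranspose_mul_apply γ L R⟩
    calc ∑ i, ‖star (γ i) • toLp 2 (L.col i)‖ ^ 2
      _ ≤ ∑ i, ‖γ i‖ ^ 2 := by
        gcongr with i
        rw [norm_smul, norm_star]
        exact mul_le_of_le_one_right (norm_nonneg _) (hL i)
      _ = ‖toLp 2 γ‖ ^ 2 := (EuclideanSpace.norm_sq_eq _).symm
      _ ≤ 1 := pow_le_one₀ (norm_nonneg _) hγ
  · rintro ⟨x, y, hx, hy, hX⟩
    refine ⟨fun i => (‖x i‖ : 𝕜), of fun k i => NormedSpace.normalize (x i) k,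
      of fun k j => y j k, ?_, fun i => ?_, hy, ?_⟩
    · rwa [EuclideanSpace.norm_eq, Real.sqrt_le_one,
        funext fun i => show ‖((‖x i‖ : ℝ) : 𝕜)‖ ^ 2 = ‖x i‖ ^ 2 by simp]
    · change ‖NormedSpace.normalize (x i)‖ ≤ 1
      obtain hi | hi := eq_or_ne (x i) 0
      · simp [hi]
      · exact (NormedSpace.norm_normalize hi).le
    · ext i j
      rw [hX, diagonal_mul_conjTranspose_mul_apply]
      change ⟪x i, y j⟫_𝕜 = ⟪star (‖x i‖ : 𝕜) • NormedSpace.normalize (x i), y j⟫_𝕜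
      rw [RCLike.star_def, RCLike.conj_ofReal, ← RCLike.real_smul_eq_coe_smul,
        NormedSpace.norm_smul_normalize]

theorem TxNorm_le_one_iff_exists_factorization_general [Fintype κ] [DecidableEq κ]
    (hl : min (Fintype.card ι) (Fintype.card κ) ≤ Fintype.card l) (X : Matrix ι κ 𝕜) :
    (∀ (a : ι → 𝕜) (B : Matrix ι κ 𝕜), (∀ i, ‖a i‖ ≤ 1) → ‖B‖ ≤ 1 →
        ‖toLp 2 fun j => ∑ i, a i * X i j * B i j‖ ≤ 1) ↔
      ∃ (γ : ι → 𝕜) (L : Matrix l ι 𝕜) (R : Matrix l κ 𝕜), ‖toLp 2 γ‖ ≤ 1 ∧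
        (∀ i, ‖toLp 2 (L.col i)‖ ≤ 1) ∧ (∀ j, ‖toLp 2 (R.col j)‖ ≤ 1) ∧
        X = diagonal γ * (Lᴴ * R) := by
  simp only [exists_factorization_iff_exists_eq_inner, EuclideanSpace.norm_eq (n := κ),
    Real.sqrt_le_one]
  constructor
  · intro hX
    obtain ⟨x, y, hx, hy, hxy⟩ := exists_eq_inner_of_sum_norm_sq_sum_mul_le (X := X) fun B hB => by
      simpa using hX 1 B (by simp) hB
    obtain ⟨x', y', hx', hy', hinner⟩ := exists_norm_le_and_inner_eq_of_min_card_le (𝕜 := 𝕜) hl x y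
    refine ⟨x', y', le_trans ?_ hx, fun j => (hy' j).trans (hy j),
      fun i j => (hxy i j).trans (hinner i j).symm⟩
    gcongr with i
    exact hx' i
  · rintro ⟨x, y, hx, hy, hxy⟩ a B ha hB
    have hinner (i : ι) (j : κ) : a i * X i j = ⟪star (a i) • x i, y j⟫_𝕜 := by
      simp [hxy, inner_smul_left]
    calc ∑ j, ‖∑ i, a i * X i j * B i j‖ ^ 2
      _ ≤ ‖B‖ ^ 2 * ∑ i, ‖star (a i) • x i‖ ^ 2 := by
        simp only [hinner]
        exact sum_norm_sq_sum_inner_mul_le _ hy B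
      _ ≤ 1 * ∑ i, ‖x i‖ ^ 2 := by
        gcongr with i
        · exact pow_le_one₀ (norm_nonneg _) hB
        · rw [norm_smul, norm_star]
          exact mul_le_of_le_one_left (norm_nonneg _) (ha i)
      _ ≤ 1 := (one_mul _).trans_le hx

end Factorization

section Complex

variable {m n : ℕ}

theorem opNorm_eq_l2_opNorm (A : Matrix (Fin m) (Fin n) ℂ) : opNorm A = ‖A‖ :=
  rfl

theorem eNorm_eq_norm_toLp (ξ : Fin n → ℂ) : eNorm ξ = ‖toLp 2 ξ‖ :=
  (EuclideanSpace.norm_eq (toLp 2 ξ)).symm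

theorem colNorm_eq_iSup_norm_toLp (L : Matrix (Fin m) (Fin n) ℂ) :
    colNorm L = ⨆ j, ‖toLp 2 (L.col j)‖ :=
  iSup_congr fun j => (EuclideanSpace.norm_eq (toLp 2 (L.col j))).symm

theorem colNorm_le_one_iff {L : Matrix (Fin m) (Fin n) ℂ} :
    colNorm L ≤ 1 ↔ ∀ j, ‖toLp 2 (L.col j)‖ ≤ 1 := by
  rw [colNorm_eq_iSup_norm_toLp]
  exact ⟨fun h j => (le_ciSup (Set.finite_range _).bddAbove j).trans h,
    fun h => Real.iSup_le h zero_le_one⟩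

theorem TxNorm_le_one_iff {X : Matrix (Fin m) (Fin n) ℂ} :
    TxNorm X ≤ 1 ↔ ∀ (a : Fin m → ℂ) (B : Matrix (Fin m) (Fin n) ℂ),
      (∀ i, ‖a i‖ ≤ 1) → ‖B‖ ≤ 1 → ‖toLp 2 fun j => ∑ i, a i * X i j * B i j‖ ≤ 1 := by
  let f (p : (Fin m → ℂ) × Matrix (Fin m) (Fin n) ℂ) : ℝ :=
    ‖toLp 2 fun j => ∑ i, p.1 i * X i j * p.2 i j‖
  let s : Set ((Fin m → ℂ) × Matrix (Fin m) (Fin n) ℂ) :=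
    {p | (∀ i, ‖p.1 i‖ ≤ 1) ∧ opNorm p.2 ≤ 1}
  have hT : TxNorm X = ⨆ p : s, f p := iSup_congr fun _ => eNorm_eq_norm_toLp _
  have hs : s = Metric.closedBall 0 1 ×ˢ Metric.closedBall 0 1 := by
    ext p
    simp [s, pi_norm_le_iff_of_nonneg, opNorm_eq_l2_opNorm]
  have : ProperSpace (Matrix (Fin m) (Fin n) ℂ) := FiniteDimensional.proper ℂ _
  have hcompact : IsCompact s := hs ▸ (isCompact_closedBall _ _).prod (isCompact_closedBall _ _)
  have hbdd : BddAbove (Set.range fun p : s => f p) := by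
    rw [← Set.image_eq_range]
    exact (hcompact.image (by fun_prop)).bddAbove
  rw [hT]
  exact ⟨fun h a B ha hB => (le_ciSup hbdd ⟨(a, B), ha, hB⟩).trans h,
    fun h => Real.iSup_le (fun p => h p.1.1 p.1.2 p.2.1 p.2.2) zero_le_one⟩

end Complex
end

/-- `‖T_X‖ ≤ 1` iff `X = Δ_m(γ) Lᴴ R` with `‖γ‖₂ ≤ 1`, `‖L‖_c ≤ 1`, `‖R‖_c ≤ 1`,
where the inner dimension can be taken to be `min m n`. -/
theorem TxNorm_le_one_iff_exists_factorization
    (m n : ℕ) (X : Matrix (Fin m) (Fin n) ℂ) :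
    TxNorm X ≤ 1 ↔
      ∃ (γ : Fin m → ℂ) (L : Matrix (Fin (min m n)) (Fin m) ℂ)
        (R : Matrix (Fin (min m n)) (Fin n) ℂ),
        eNorm γ ≤ 1 ∧ colNorm L ≤ 1 ∧ colNorm R ≤ 1 ∧
        X = Matrix.diagonal γ * (Lᴴ * R) := by
  simpa only [TxNorm_le_one_iff, eNorm_eq_norm_toLp, colNorm_le_one_iff] using
    TxNorm_le_one_iff_exists_factorization_general (by simp) X
end
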